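/- arXiv:1309.3526 — 2 statements merged into one kernel-verified Lean document; each statement's English description precedes it below -/
import Mathlib

section
/- Let A be a unital C*-algebra. For all a, b, c, e in A and every φ in the dual A*, the Jordan identity holds with the functional in the middle slot of the inner triple product: {a,b,{c,φ,e}} = {{a,b,c},φ,e} - {c,{b,a,φ},e} + {c,φ,{a,b,e}} (an equality of functionals on A). -/
noncomputable section

variable {A : Type*} [NormedRing A] [StarRing A] [CStarRing A]
  [NormedAlgebra ℂ A] [CompleteSpace A] [StarModule ℂ A]

/-- The triple product `{a,b,c} = (a b* c + c b* a)/2` on a C*-algebra. -/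
def tp (a b c : A) : A := (2 : ℂ)⁻¹ • (a * star b * c + c * star b * a)

/-- The module triple product `{a,b,φ} = {φ,b,a}`, given by `x ↦ φ({b,a,x})`. -/
def tOut (a b : A) (φ : A → ℂ) : A → ℂ := fun x => φ (tp b a x)

/-- The module triple product `{a,φ,b}`, given by `x ↦ conj (φ ({a,x,b}))`. -/
def tMid (a : A) (φ : A → ℂ) (b : A) : A → ℂ := fun x => starRingEnd ℂ (φ (tp a x b))

/-- The adjoint functional `φ*(x) = conj (φ (x*))`. -/
def fstar (φ : A → ℂ) : A → ℂ := fun x => starRingEnd ℂ (φ (star x))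

/-- The module action `a·φ : x ↦ φ(x a)`. -/
def actL (a : A) (φ : A → ℂ) : A → ℂ := fun x => φ (x * a)

/-- The module action `φ·a : x ↦ φ(a x)`. -/
def actR (φ : A → ℂ) (a : A) : A → ℂ := fun x => φ (a * x)

/-- The commutator `[φ,a] = φ·a - a·φ : x ↦ φ(a x - x a)`. -/
def fcomm (φ : A → ℂ) (a : A) : A → ℂ := fun x => φ (a * x - x * a)

/-- The inner binary derivation `D_ψ(x) = ψ·x - x·ψ`, so `D_ψ(x)(y) = ψ(x y - y x)`. -/
def Dd (ψ : A → ℂ) (x : A) : A → ℂ := fun y => ψ (x * y - y * x)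

/-!
Twice `{a,b,y}` is `l y + y r` with `l = ab*` and `r = b*a`, while twice `{b,a,x}*` is
`r x* + x* l`, the multipliers having changed sides. Hence in a product rule for `{a,b,·}` on
`c x* e` the superfluous terms `c r x* e` and `c x* l e` add up to twice `c {b,a,x}* e`.
Symmetrizing in `c` and `e` gives the Jordan identity in the algebra, to which one applies `φ`
and conjugation.
-/

section JordanTriple

variable {B : Type*} [NormedRing B] [StarRing B] [NormedAlgebra ℂ B]

theorem tp_add_right (a b x y : B) : tp a b (x + y) = tp a b x + tp a b y := by
  simp only [tp, mul_add, add_mul]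
  module

theorem tp_smul_right (r : ℂ) (a b x : B) : tp a b (r • x) = r • tp a b x := by
  simp only [tp, mul_smul_comm, smul_mul_assoc]
  module

variable [StarModule ℂ B]

theorem star_tp (a b c : B) : star (tp a b c) = tp (star a) (star b) (star c) := by
  simp only [tp, star_smul, star_add, star_mul, star_star, star_inv₀, star_ofNat, mul_assoc,
    add_comm]

theorem tp_mul_star_mul (a b c x e : B) :
    tp a b (c * star x * e) =
      tp a b c * star x * e - c * star (tp b a x) * e + c * star x * tp a b e := by
  rw [star_tp]
  simp only [tp, star_star, smul_mul_assoc, mul_smul_comm, ← smul_sub, ← smul_add]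
  congr 1
  noncomm_ring

theorem tp_tp_right (a b c x e : B) :
    tp a b (tp c x e) = tp (tp a b c) x e - tp c (tp b a x) e + tp c x (tp a b e) :=
  calc
    tp a b (tp c x e) =
        (2 : ℂ)⁻¹ • (tp a b (c * star x * e) + tp a b (e * star x * c)) := by
      rw [← tp_add_right, ← tp_smul_right, ← tp]
    _ = (2 : ℂ)⁻¹ •
        ((tp a b c * star x * e - c * star (tp b a x) * e + c * star x * tp a b e) +
          (tp a b e * star x * c - e * star (tp b a x) * c + e * star x * tp a b c)) := by
      rw [tp_mul_star_mul, tp_mul_star_mul]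
    _ = tp (tp a b c) x e - tp c (tp b a x) e + tp c x (tp a b e) := by
      rw [tp.eq_def (tp a b c), tp.eq_def c (tp b a x), tp.eq_def c x]
      module

theorem jordan_identity_functional_inner_middle_slot_general (a b c e : B) (φ : B →+ ℂ) :
    tOut a b (tMid c φ e) =
      tMid (tp a b c) φ e - tMid c (tOut b a φ) e + tMid c φ (tp a b e) := by
  funext x
  have jordan : tp c (tp b a x) e =
      tp (tp a b c) x e - tp a b (tp c x e) + tp c x (tp a b e) := by
    rw [tp_tp_right]
    abel
  simp only [tOut, tMid, Pi.add_apply, Pi.sub_apply, jordan, map_add, map_sub]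

end JordanTriple

/-- Jordan identity with the functional in the middle slot of the inner triple product:
`{a,b,{c,φ,e}} = {{a,b,c},φ,e} - {c,{b,a,φ},e} + {c,φ,{a,b,e}}`. -/
theorem jordan_identity_functional_inner_middle_slot (a b c e : A) (φ : A →L[ℂ] ℂ) :
    tOut a b (tMid c ⇑φ e) =
      tMid (tp a b c) ⇑φ e - tMid c (tOut b a ⇑φ) e + tMid c ⇑φ (tp a b e) :=
  jordan_identity_functional_inner_middle_slot_general a b c e (φ : A →+ ℂ)
end
end

section
/- Let A be a unital C*-algebra, ψ, φ_1,…,φ_n ∈ A* and b_1,…,b_n ∈ A. If D_ψ∘* = Σ_{j=1}^n (L(φ_j,b_j) - L(b_j,φ_j)) as maps from A to A*, then for all a, x ∈ A: 4ψ([a,x]) = Σ_{j=1}^n [φ_j,b_j]([a,x]) + Σ_{j=1}^n [φ_j*,b_j*]([a,x]), where [a,x] = ax - xa. -/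
noncomputable section

variable {A : Type*} [NormedRing A] [StarRing A] [CStarRing A]
  [NormedAlgebra ℂ A] [CompleteSpace A] [StarModule ℂ A]

/-!
Apply the hypothesis at `a*` and evaluate at `x`, then exchange `a` and `x` and subtract. The left
side becomes `2ψ([a,x])` because `[x,a] = -[a,x]`. On the right, antisymmetrizing `{b,a*,x}` in `a`
and `x` produces half the double commutator `[b,[a,x]]`, and the conjugated terms yield the same
with `b*` and `φ*` because the involution reverses commutators.
-/

section StarAlgebra

variable (𝕜 : Type*) {R : Type*} [Field 𝕜] [NonUnitalRing R] [StarRing R] [Module 𝕜 R]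

/-- The triple product `{a,b,c} = (a b* c + c b* a)/2` on an algebra `R` with involution over a
field `𝕜`. For a C*-algebra and `𝕜 = ℂ` it is definitionally `tp`. -/
def starTriple (a b c : R) : R := (2 : 𝕜)⁻¹ • (a * star b * c + c * star b * a)

variable {𝕜}

/-- The inner triple derivation `L(φ,b) - L(b,φ)` from `R` to its dual, uncurried: the value at `y`
of the functional assigned to `x`. -/
def innerTripleDerivation [StarRing 𝕜] (φ : Module.Dual 𝕜 R) (b x y : R) : 𝕜 :=
  φ (starTriple 𝕜 b x y) - starRingEnd 𝕜 (φ (starTriple 𝕜 b y x))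

theorem neg_bracket {S : Type*} [NonUnitalNonAssocRing S] (a b : S) : -⁅a, b⁆ = ⁅b, a⁆ :=
  neg_sub _ _

theorem star_bracket {S : Type*} [NonUnitalNonAssocRing S] [StarRing S] (a b : S) :
    star ⁅a, b⁆ = ⁅star b, star a⁆ := by
  simp only [Ring.lie_def, star_sub, star_mul]

theorem starTriple_star_sub_swap (b a x : R) :
    starTriple 𝕜 b (star a) x - starTriple 𝕜 b (star x) a = (2 : 𝕜)⁻¹ • ⁅b, ⁅a, x⁆⁆ := by
  simp only [starTriple, ← smul_sub, star_star, Ring.lie_def]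
  congr 1
  noncomm_ring

theorem starTriple_sub_swap_star (b a x : R) :
    starTriple 𝕜 b x (star a) - starTriple 𝕜 b a (star x) =
      -(2 : 𝕜)⁻¹ • star ⁅star b, ⁅a, x⁆⁆ := by
  have h := starTriple_star_sub_swap (𝕜 := 𝕜) b (star x) (star a)
  have hskew : ⁅b, ⁅star x, star a⁆⁆ = -star ⁅star b, ⁅a, x⁆⁆ := by
    rw [star_bracket, star_star, star_bracket, neg_bracket]
  rwa [star_star, star_star, hskew, smul_neg, ← neg_smul] at h

variable [StarRing 𝕜] [NeZero (2 : 𝕜)]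

theorem two_mul_innerTripleDerivation_star_sub_swap (φ : Module.Dual 𝕜 R) (b a x : R) :
    2 * (innerTripleDerivation φ b (star a) x - innerTripleDerivation φ b (star x) a) =
      φ ⁅b, ⁅a, x⁆⁆ + starRingEnd 𝕜 (φ (star ⁅star b, ⁅a, x⁆⁆)) :=
  calc
    _ = 2 * (φ (starTriple 𝕜 b (star a) x - starTriple 𝕜 b (star x) a) -
          starRingEnd 𝕜 (φ (starTriple 𝕜 b x (star a) - starTriple 𝕜 b a (star x)))) := by
      simp only [innerTripleDerivation, map_sub]
      ring
    _ = 2 * (2⁻¹ * φ ⁅b, ⁅a, x⁆⁆ + 2⁻¹ * starRingEnd 𝕜 (φ (star ⁅star b, ⁅a, x⁆⁆))) := by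
      rw [starTriple_star_sub_swap, starTriple_sub_swap_star]
      simp only [map_smul, smul_eq_mul, map_mul, map_neg, map_inv₀, map_ofNat, neg_mul,
        sub_neg_eq_add]
    _ = _ := by rw [← mul_add, mul_inv_cancel_left₀ two_ne_zero]

theorem four_psi_commutator_of_exact_inner_general {ι : Type*} (s : Finset ι)
    (ψ : Module.Dual 𝕜 R) (φ : ι → Module.Dual 𝕜 R) (b : ι → R)
    (h : ∀ x y : R, ψ ⁅star x, y⁆ = ∑ j ∈ s, innerTripleDerivation (φ j) (b j) x y) (a x : R) :
    4 * ψ ⁅a, x⁆ =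
      ∑ j ∈ s, φ j ⁅b j, ⁅a, x⁆⁆ +
        ∑ j ∈ s, starRingEnd 𝕜 (φ j (star ⁅star (b j), ⁅a, x⁆⁆)) := by
  have hskew : ψ ⁅x, a⁆ = -ψ ⁅a, x⁆ := by rw [← map_neg, neg_bracket]
  calc
    4 * ψ ⁅a, x⁆ = 2 * (ψ ⁅star (star a), x⁆ - ψ ⁅star (star x), a⁆) := by
      rw [star_star, star_star, hskew]
      ring
    _ = ∑ j ∈ s, 2 * (innerTripleDerivation (φ j) (b j) (star a) x -
          innerTripleDerivation (φ j) (b j) (star x) a) := by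
      rw [h, h, ← Finset.sum_sub_distrib, Finset.mul_sum]
    _ = _ := by
      simp only [two_mul_innerTripleDerivation_star_sub_swap, Finset.sum_add_distrib]

end StarAlgebra

/-- If `D_ψ∘* = Σ_j (L(φ_j,b_j) - L(b_j,φ_j))` as maps from `A` to `A*`, then
`4ψ([a,x]) = Σ_j [φ_j,b_j]([a,x]) + Σ_j [φ_j*,b_j*]([a,x])` for all `a, x ∈ A`. -/
theorem four_psi_commutator_of_exact_inner (ψ : A →L[ℂ] ℂ) (n : ℕ)
    (φs : Fin n → (A →L[ℂ] ℂ)) (bs : Fin n → A)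
    (h : ∀ x : A,
      Dd ⇑ψ (star x) = ∑ j, (tOut x (bs j) ⇑(φs j) - tMid (bs j) ⇑(φs j) x)) :
    ∀ a x : A,
      4 * ψ (a * x - x * a) =
        (∑ j, fcomm ⇑(φs j) (bs j)) (a * x - x * a) +
          (∑ j, fcomm (fstar ⇑(φs j)) (star (bs j))) (a * x - x * a) := by
  intro a x
  rw [Finset.sum_apply, Finset.sum_apply]
  exact four_psi_commutator_of_exact_inner_general Finset.univ
    ψ.toLinearMap (fun j => (φs j).toLinearMap) bs
    (fun y z => (congrFun (h y) z).trans (Finset.sum_apply _ _ _)) a x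
end
end
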